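/- Let K and L be distributive lattices with L having a least element 0, let f : K → L be a lattice homomorphism, and let a₁, a₂, b ∈ K. If the pair (f(a₁), f(a₂)) is consonant in L (i.e., there exist u, v ∈ L with f(a₁) ∨ f(a₂) = f(a₁) ∨ v = u ∨ f(a₂) and u ∧ v = 0) and f is closed at both (a₁,b) and (a₂,b), then f is closed at (a₁ ∧ a₂, b). -/

import Mathlib

/-- A lattice homomorphism `f` is *closed at* `(a, b)` if for every `x` with
`f a ≤ f b ⊔ x` there is `u` with `a ≤ b ⊔ u` and `f u ≤ x`. -/
def ClosedAt {K L : Type*} [Lattice K] [Lattice L] (f : LatticeHom K L) (a b : K) : Prop :=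
  ∀ x : L, f a ≤ f b ⊔ x → ∃ u : K, a ≤ b ⊔ u ∧ f u ≤ x

/-- A pair `(a, b)` in a lattice with bottom is *consonant* if it admits a splitting pair. -/
def Consonant {L : Type*} [Lattice L] [OrderBot L] (a b : L) : Prop :=
  ∃ u v : L, a ⊔ b = a ⊔ v ∧ a ⊔ b = u ⊔ b ∧ u ⊓ v = ⊥

theorem closedAt_inf_left {K L : Type*} [DistribLattice K] [DistribLattice L] [OrderBot L]
    (f : LatticeHom K L) (a₁ a₂ b : K)
    (hcons : Consonant (f a₁) (f a₂))
    (h₁ : ClosedAt f a₁ b) (h₂ : ClosedAt f a₂ b) :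
    ClosedAt f (a₁ ⊓ a₂) b := by
  obtain ⟨u, v, hv, hu, huv⟩ := hcons
  intro x hx
  rw [map_inf] at hx
  have e₁ : f a₁ ≤ f b ⊔ (x ⊔ u) := by
    have h : f a₁ ≤ u ⊔ f a₂ := hu ▸ le_sup_left
    calc f a₁ ≤ f a₁ ⊓ (u ⊔ f a₂) := le_inf le_rfl h
      _ = f a₁ ⊓ u ⊔ f a₁ ⊓ f a₂ := inf_sup_left _ _ _
      _ ≤ u ⊔ (f b ⊔ x) := sup_le_sup inf_le_right hx
      _ = f b ⊔ (x ⊔ u) := by rw [sup_comm, sup_assoc]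
  have e₂ : f a₂ ≤ f b ⊔ (x ⊔ v) := by
    have h : f a₂ ≤ f a₁ ⊔ v := hv ▸ le_sup_right
    calc f a₂ ≤ (f a₁ ⊔ v) ⊓ f a₂ := le_inf h le_rfl
      _ = f a₁ ⊓ f a₂ ⊔ v ⊓ f a₂ := inf_sup_right _ _ _
      _ ≤ (f b ⊔ x) ⊔ v := sup_le_sup hx inf_le_left
      _ = f b ⊔ (x ⊔ v) := sup_assoc _ _ _
  obtain ⟨w₁, hw₁, k₁⟩ := h₁ _ e₁
  obtain ⟨w₂, hw₂, k₂⟩ := h₂ _ e₂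
  refine ⟨w₁ ⊓ w₂, ?_, ?_⟩
  · rw [sup_inf_left]
    exact inf_le_inf hw₁ hw₂
  · rw [map_inf]
    calc f w₁ ⊓ f w₂ ≤ (x ⊔ u) ⊓ (x ⊔ v) := inf_le_inf k₁ k₂
      _ = x := by rw [← sup_inf_left, huv, sup_bot_eq]
      _ ≤ x := le_rfl
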